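/- For every θ ∈ [0, π/2], one has K(sin(θ/2)) · K(cos(θ/2)) = ∫_0^{π/2} K(√(1 − sin²θ cos²φ)) dφ. -/

import Mathlib

open Real MeasureTheory intervalIntegral

/-- Complete elliptic integral of the first kind. -/
noncomputable def ellipticK (k : ℝ) : ℝ :=
  ∫ θ in (0:ℝ)..(π/2), 1 / Real.sqrt (1 - k^2 * Real.sin θ ^ 2)

lemma param_deriv {F F' : ℝ → ℝ → ℝ} {U : Set ℝ} (hU : IsOpen U) (a b : ℝ)
    (hF : ContinuousOn (fun p : ℝ × ℝ => F p.1 p.2) (U ×ˢ Set.univ))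
    (hF' : ContinuousOn (fun p : ℝ × ℝ => F' p.1 p.2) (U ×ˢ Set.univ))
    (hd : ∀ x ∈ U, ∀ t, HasDerivAt (fun x => F x t) (F' x t) x) (x : ℝ) (hx : x ∈ U) :
    HasDerivAt (fun x => ∫ t in a..b, F x t) (∫ t in a..b, F' x t) x := by
  obtain ⟨r, hr, hrU⟩ := Metric.isOpen_iff.1 hU x hx
  have hsub : Metric.closedBall x (r/2) ⊆ U :=
    (Metric.closedBall_subset_ball (by linarith)).trans hrU
  have hK : IsCompact (Metric.closedBall x (r/2) ×ˢ Set.uIcc a b) :=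
    (isCompact_closedBall x (r/2)).prod isCompact_uIcc
  obtain ⟨C, hC⟩ := hK.exists_bound_of_continuousOn
    (hF'.mono (Set.prod_mono hsub (Set.subset_univ _)))
  have sec : ∀ {H : ℝ → ℝ → ℝ}, ContinuousOn (fun p : ℝ × ℝ => H p.1 p.2) (U ×ˢ Set.univ) →
      ∀ y ∈ U, Continuous (H y) := by
    intro H hH y hy
    rw [← continuousOn_univ]
    exact hH.comp (f := fun t => (y, t)) (by fun_prop) (fun t _ => ⟨hy, trivial⟩)
  refine (intervalIntegral.hasDerivAt_integral_of_dominated_loc_of_deriv_le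
    (F := F) (F' := F') (bound := fun _ => C) (μ := volume) (s := Metric.ball x (r/2)) (a := a) (b := b)
    (Metric.ball_mem_nhds x (by linarith)) ?_ ?_ ?_ ?_ ?_ ?_).2
  · filter_upwards [hU.mem_nhds hx] with y hy
    exact (sec hF y hy).aestronglyMeasurable
  · exact (sec hF x hx).intervalIntegrable _ _
  · exact (sec hF' x hx).aestronglyMeasurable
  · refine Filter.Eventually.of_forall fun t ht y hy => ?_
    exact hC (y, t) ⟨Metric.ball_subset_closedBall hy, Set.uIoc_subset_uIcc ht⟩
  · exact intervalIntegrable_const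
  · refine Filter.Eventually.of_forall fun t ht y hy => ?_
    exact hd y (hsub (Metric.ball_subset_closedBall hy)) t

noncomputable def Jn (n : ℕ) (m : ℝ) : ℝ :=
  ∫ t in (0:ℝ)..(π/2), Real.sin t ^ (2*n) * (1 - m * Real.sin t ^ 2) ^ (-((n:ℝ) + 1/2))

lemma D_pos {m : ℝ} (hm : m < 1) (t : ℝ) : 0 < 1 - m * Real.sin t ^ 2 := by
  have h1 := Real.sin_sq_le_one t
  have h0 := sq_nonneg (Real.sin t)
  by_cases h : 0 ≤ m
  · nlinarith
  · push Not at h; nlinarith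

lemma Jint_cont (n : ℕ) : ContinuousOn
    (fun p : ℝ × ℝ => Real.sin p.2 ^ (2*n) * (1 - p.1 * Real.sin p.2 ^ 2) ^ (-((n:ℝ) + 1/2)))
    (Set.Iio 1 ×ˢ Set.univ) := by
  refine ContinuousOn.mul (by fun_prop) (ContinuousOn.rpow_const (by fun_prop) ?_)
  rintro ⟨m, t⟩ ⟨hm, _⟩
  exact Or.inl (D_pos hm t).ne'

lemma Jn_deriv (n : ℕ) (m : ℝ) (hm : m < 1) :
    HasDerivAt (Jn n) (((n:ℝ) + 1/2) * Jn (n+1) m) m := by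
  have := param_deriv (U := Set.Iio 1) isOpen_Iio 0 (π/2)
    (F := fun m t => Real.sin t ^ (2*n) * (1 - m * Real.sin t ^ 2) ^ (-((n:ℝ) + 1/2))) (Jint_cont n)
    (F' := fun m t => ((n:ℝ) + 1/2) * (Real.sin t ^ (2*(n+1)) *
      (1 - m * Real.sin t ^ 2) ^ (-(((n+1 : ℕ):ℝ) + 1/2))))
    (continuousOn_const.mul (Jint_cont (n+1))) ?_ m hm
  · rw [intervalIntegral.integral_const_mul] at this
    exact this
  · intro x hx t
    have h1 : HasDerivAt (fun x => 1 - x * Real.sin t ^ 2) (-(Real.sin t ^ 2)) x := by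
      simpa using ((hasDerivAt_id x).mul_const (Real.sin t ^ 2)).const_sub 1
    have h2 := (h1.rpow_const (p := -((n:ℝ) + 1/2)) (Or.inl (D_pos hx t).ne')).const_mul
      (Real.sin t ^ (2*n))
    refine h2.congr_deriv ?_
    have : (-(((n+1 : ℕ):ℝ) + 1/2)) = -((n:ℝ) + 1/2) - 1 := by push_cast; ring
    rw [this]; ring

lemma Jn_cont (n : ℕ) : ContinuousOn (Jn n) (Set.Iio 1) :=
  fun m hm => (Jn_deriv n m hm).continuousAt.continuousWithinAt

lemma Jn_sec_cont (n : ℕ) {m : ℝ} (hm : m < 1) : Continuous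
    (fun t => Real.sin t ^ (2*n) * (1 - m * Real.sin t ^ 2) ^ (-((n:ℝ) + 1/2))) := by
  refine Continuous.mul (by fun_prop) (Continuous.rpow_const (by fun_prop) ?_)
  exact fun t => Or.inl (D_pos hm t).ne'

lemma J_ode {m : ℝ} (hm : m < 1) :
    m * (1 - m) * (3/4 * Jn 2 m) + (1 - 2*m) * (1/2 * Jn 1 m) = 1/4 * Jn 0 m := by
  have key : ∫ t in (0:ℝ)..(π/2), (m * (1 - m) * (3/4) *
        (Real.sin t ^ (2*2) * (1 - m * Real.sin t ^ 2) ^ (-(((2:ℕ):ℝ) + 1/2)))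
      + (1 - 2*m) * (1/2) * (Real.sin t ^ (2*1) * (1 - m * Real.sin t ^ 2) ^ (-(((1:ℕ):ℝ) + 1/2)))
      - 1/4 * (Real.sin t ^ (2*0) * (1 - m * Real.sin t ^ 2) ^ (-(((0:ℕ):ℝ) + 1/2)))) = 0 := by
    rw [intervalIntegral.integral_eq_sub_of_hasDerivAt
      (f := fun t => -(1/4) * (Real.sin t * Real.cos t * (1 - m * Real.sin t ^ 2) ^ (-(3/2:ℝ))))]
    · simp
    · intro t _
      have hD := D_pos hm t
      have h1 : HasDerivAt (fun t => 1 - m * Real.sin t ^ 2)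
          (-(m * (2 * Real.sin t * Real.cos t))) t := by
        have := (((Real.hasDerivAt_sin t).pow 2).const_mul m).const_sub 1
        refine this.congr_deriv ?_
        push_cast; ring
      have h2 := h1.rpow_const (p := -(3/2:ℝ)) (Or.inl hD.ne')
      have h3 := (((Real.hasDerivAt_sin t).mul (Real.hasDerivAt_cos t)).mul h2).const_mul (-(1/4))
      refine h3.congr_deriv ?_
      have e1 : (-(((2:ℕ):ℝ) + 1/2)) = -(5/2) := by norm_num
      have e2 : (-(((1:ℕ):ℝ) + 1/2)) = -(5/2) + 1 := by norm_num
      have e3 : (-(((0:ℕ):ℝ) + 1/2)) = -(5/2) + 1 + 1 := by norm_num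
      have e4 : (-(3/2:ℝ)) = -(5/2) + 1 := by norm_num
      have e5 : (-(3/2:ℝ)) - 1 = -(5/2) := by norm_num
      rw [e5, e1, e2, e3, e4]
      simp only [Pi.mul_apply, Real.rpow_add_one hD.ne']
      have hc : Real.cos t ^ 2 = 1 - Real.sin t ^ 2 := by rw [← Real.sin_sq_add_cos_sq t]; ring
      generalize (1 - m * Real.sin t ^ 2) ^ (-(5/2:ℝ)) = X
      linear_combination ((1/4)*m*X*(3 * Real.sin t ^ 2) + (1/4) * (1 - m * Real.sin t ^ 2) * X
        - (m * Real.sin t ^ 2 + 1/2) * X) * hc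
    · exact ((((Jn_sec_cont 2 hm).const_mul _).add ((Jn_sec_cont 1 hm).const_mul _)).sub
        ((Jn_sec_cont 0 hm).const_mul _)).intervalIntegrable _ _
  have i0 : IntervalIntegrable _ volume 0 (π/2) := ((Jn_sec_cont 0 hm).const_mul (1/4)).intervalIntegrable _ _
  have i1 : IntervalIntegrable _ volume 0 (π/2) := ((Jn_sec_cont 1 hm).const_mul ((1 - 2*m) * (1/2))).intervalIntegrable _ _
  have i2 : IntervalIntegrable _ volume 0 (π/2) := ((Jn_sec_cont 2 hm).const_mul (m * (1 - m) * (3/4))).intervalIntegrable _ _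
  rw [intervalIntegral.integral_sub (i2.add i1) i0, intervalIntegral.integral_add i2 i1,
    intervalIntegral.integral_const_mul, intervalIntegral.integral_const_mul,
    intervalIntegral.integral_const_mul] at key
  simp only [Jn]
  linarith

lemma J0_pos {m : ℝ} (hm : m < 1) : 0 < Jn 0 m := by
  refine intervalIntegral.intervalIntegral_pos_of_pos ((Jn_sec_cont 0 hm).intervalIntegrable _ _) ?_
    (by positivity)
  intro t
  have := D_pos hm t
  simp only [mul_zero, pow_zero, one_mul]
  positivity

lemma J0_zero : Jn 0 0 = π/2 := by
  simp [Jn]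

lemma ellipticK_eq {x : ℝ} (hx : x ^ 2 ≤ 1) : ellipticK x = Jn 0 (x^2) := by
  unfold ellipticK Jn
  congr 1
  ext t
  have : 0 ≤ 1 - x^2 * Real.sin t ^ 2 := by
    have h1 := Real.sin_sq_le_one t
    have h0 := sq_nonneg (Real.sin t)
    nlinarith [sq_nonneg x]
  rw [Real.sqrt_eq_rpow, Real.rpow_neg (by simpa using this)]
  simp

noncomputable def Mf (α θ φ : ℝ) : ℝ :=
  (1 - (Real.cos θ * Real.cos α + Real.sin θ * Real.sin α * Real.cos φ)) / 2

lemma M_lt {α θ : ℝ} (hα : 0 < α) (hθ : |θ| < π - α) (φ : ℝ) : Mf α θ φ < 1 := by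
  have h0 := abs_nonneg θ
  have hc : Real.cos (π) < Real.cos (|θ| + α) :=
    Real.cos_lt_cos_of_nonneg_of_le_pi (by linarith) le_rfl (by linarith)
  rw [Real.cos_pi, Real.cos_add, Real.cos_abs] at hc
  have hsa : 0 < Real.sin α := Real.sin_pos_of_pos_of_lt_pi hα (by linarith)
  have hs : 0 ≤ Real.sin |θ| := Real.sin_nonneg_of_nonneg_of_le_pi h0 (by linarith)
  have h1 := Real.neg_one_le_cos φ
  have h2 := Real.cos_le_one φ
  have : -(Real.sin |θ|) ≤ Real.sin θ * Real.cos φ := by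
    rcases abs_cases θ with ⟨h, _⟩ | ⟨h, _⟩
    · rw [h] at hs ⊢; nlinarith
    · rw [h, Real.sin_neg] at hs ⊢; nlinarith
  unfold Mf
  nlinarith

lemma Uopen (α : ℝ) : IsOpen {θ : ℝ | |θ| < π - α} :=
  isOpen_lt continuous_abs continuous_const

lemma JM_cont (n : ℕ) {α : ℝ} (hα : 0 < α) :
    ContinuousOn (fun p : ℝ × ℝ => Jn n (Mf α p.1 p.2)) ({θ : ℝ | |θ| < π - α} ×ˢ Set.univ) := by
  refine (Jn_cont n).comp ?_ ?_
  · unfold Mf; fun_prop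
  · rintro ⟨θ, φ⟩ ⟨h, _⟩
    exact M_lt hα h φ

noncomputable def Mt (α θ φ : ℝ) : ℝ :=
  (Real.sin θ * Real.cos α - Real.cos θ * Real.sin α * Real.cos φ) / 2

lemma M_deriv (α θ φ : ℝ) : HasDerivAt (fun θ => Mf α θ φ) (Mt α θ φ) θ := by
  have := (((((Real.hasDerivAt_cos θ).mul_const (Real.cos α)).add
    (((Real.hasDerivAt_sin θ).mul_const (Real.sin α)).mul_const (Real.cos φ))).const_sub 1).div_const 2)
  refine this.congr_deriv ?_
  unfold Mt; ring

lemma Mt_deriv (α θ φ : ℝ) : HasDerivAt (fun θ => Mt α θ φ) ((1 - 2 * Mf α θ φ) / 2) θ := by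
  have := ((((Real.hasDerivAt_sin θ).mul_const (Real.cos α)).sub
    (((Real.hasDerivAt_cos θ).mul_const (Real.sin α)).mul_const (Real.cos φ))).div_const 2)
  refine this.congr_deriv ?_
  unfold Mf; ring

lemma Mphi_deriv (α θ φ : ℝ) : HasDerivAt (fun φ => Mf α θ φ)
    (Real.sin θ * Real.sin α * Real.sin φ / 2) φ := by
  have := ((((Real.hasDerivAt_cos φ).const_mul (Real.sin θ * Real.sin α)).const_add
    (Real.cos θ * Real.cos α)).const_sub 1).div_const 2
  refine this.congr_deriv ?_
  ring

noncomputable def G0 (α θ : ℝ) : ℝ := ∫ φ in (0:ℝ)..π, Jn 0 (Mf α θ φ)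
noncomputable def G1 (α θ : ℝ) : ℝ := ∫ φ in (0:ℝ)..π, 1/2 * Jn 1 (Mf α θ φ) * Mt α θ φ
noncomputable def G2 (α θ : ℝ) : ℝ := ∫ φ in (0:ℝ)..π,
  (3/4 * Jn 2 (Mf α θ φ) * Mt α θ φ ^ 2 + 1/2 * Jn 1 (Mf α θ φ) * ((1 - 2 * Mf α θ φ) / 2))

lemma J0d {m : ℝ} (hm : m < 1) : HasDerivAt (Jn 0) (1/2 * Jn 1 m) m :=
  (Jn_deriv 0 m hm).congr_deriv (by norm_num)
lemma J1d {m : ℝ} (hm : m < 1) : HasDerivAt (fun m => 1/2 * Jn 1 m) (3/4 * Jn 2 m) m :=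
  ((Jn_deriv 1 m hm).const_mul (1/2)).congr_deriv (by norm_num; ring)

lemma g1_cont {α : ℝ} (hα : 0 < α) :
    ContinuousOn (fun p : ℝ × ℝ => 1/2 * Jn 1 (Mf α p.1 p.2) * Mt α p.1 p.2)
      ({θ : ℝ | |θ| < π - α} ×ˢ Set.univ) := by
  refine (continuousOn_const.mul (JM_cont 1 hα)).mul ?_
  unfold Mt; fun_prop

lemma g2_cont {α : ℝ} (hα : 0 < α) :
    ContinuousOn (fun p : ℝ × ℝ => 3/4 * Jn 2 (Mf α p.1 p.2) * Mt α p.1 p.2 ^ 2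
      + 1/2 * Jn 1 (Mf α p.1 p.2) * ((1 - 2 * Mf α p.1 p.2) / 2))
      ({θ : ℝ | |θ| < π - α} ×ˢ Set.univ) := by
  refine ((continuousOn_const.mul (JM_cont 2 hα)).mul ?_).add
    ((continuousOn_const.mul (JM_cont 1 hα)).mul ?_)
  · unfold Mt; fun_prop
  · unfold Mf; fun_prop

lemma G0_deriv {α θ : ℝ} (hα : 0 < α) (hθ : |θ| < π - α) :
    HasDerivAt (G0 α) (G1 α θ) θ :=
  param_deriv (Uopen α) 0 π (F := fun θ φ => Jn 0 (Mf α θ φ))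
    (F' := fun θ φ => 1/2 * Jn 1 (Mf α θ φ) * Mt α θ φ) (JM_cont 0 hα) (g1_cont hα)
    (fun x hx t => HasDerivAt.comp (h₂ := Jn 0) x (J0d (M_lt hα hx t)) (M_deriv α x t)) θ hθ

lemma G1_deriv {α θ : ℝ} (hα : 0 < α) (hθ : |θ| < π - α) :
    HasDerivAt (G1 α) (G2 α θ) θ :=
  param_deriv (Uopen α) 0 π (F := fun θ φ => 1/2 * Jn 1 (Mf α θ φ) * Mt α θ φ)
    (F' := fun θ φ => (3/4 * Jn 2 (Mf α θ φ) * Mt α θ φ ^ 2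
      + 1/2 * Jn 1 (Mf α θ φ) * ((1 - 2 * Mf α θ φ) / 2))) (g1_cont hα) (g2_cont hα)
    (fun x hx t => by
      have h := ((J1d (M_lt hα hx t)).comp x (M_deriv α x t)).mul (Mt_deriv α x t)
      refine h.congr_deriv ?_
      simp only [Function.comp]
      ring) θ hθ

lemma sec_cont {U : Set ℝ} {H : ℝ → ℝ → ℝ}
    (hH : ContinuousOn (fun p : ℝ × ℝ => H p.1 p.2) (U ×ˢ Set.univ))
    {y : ℝ} (hy : y ∈ U) : Continuous (H y) := by
  rw [← continuousOn_univ]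
  exact hH.comp (f := fun t => (y, t)) (by fun_prop) (fun t _ => ⟨hy, trivial⟩)

lemma G_ode {α θ : ℝ} (hα : 0 < α) (hθ : |θ| < π - α) :
    Real.cos θ * G1 α θ + Real.sin θ * G2 α θ = 1/4 * Real.sin θ * G0 α θ := by
  have c0 := sec_cont (H := fun θ φ => Jn 0 (Mf α θ φ)) (JM_cont 0 hα) hθ
  have cJ1 := sec_cont (H := fun θ φ => Jn 1 (Mf α θ φ)) (JM_cont 1 hα) hθ
  have cJ2 := sec_cont (H := fun θ φ => Jn 2 (Mf α θ φ)) (JM_cont 2 hα) hθ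
  have c1 := sec_cont (H := fun θ φ => 1/2 * Jn 1 (Mf α θ φ) * Mt α θ φ) (g1_cont hα) hθ
  have c2 := sec_cont (H := fun θ φ => (3/4 * Jn 2 (Mf α θ φ) * Mt α θ φ ^ 2
      + 1/2 * Jn 1 (Mf α θ φ) * ((1 - 2 * Mf α θ φ) / 2))) (g2_cont hα) hθ
  have key : ∫ φ in (0:ℝ)..π, (1/4 * Real.sin θ * Jn 0 (Mf α θ φ) -
      Real.cos θ * (1/2 * Jn 1 (Mf α θ φ) * Mt α θ φ) -
      Real.sin θ * (3/4 * Jn 2 (Mf α θ φ) * Mt α θ φ ^ 2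
      + 1/2 * Jn 1 (Mf α θ φ) * ((1 - 2 * Mf α θ φ) / 2))) = 0 := by
    rw [intervalIntegral.integral_eq_sub_of_hasDerivAt
      (f := fun φ => 1/2 * Jn 1 (Mf α θ φ) * (Real.sin α * Real.sin φ / 2))]
    · simp
    · intro φ _
      have hm := M_lt hα hθ φ
      have h := ((J1d hm).comp φ (Mphi_deriv α θ φ)).mul
        (((Real.hasDerivAt_sin φ).const_mul (Real.sin α)).div_const 2)
      refine h.congr_deriv ?_
      have ode := J_ode hm
      simp only [Function.comp]
      have e1 : Real.sin θ ^ 2 = 1 - Real.cos θ ^ 2 := by rw [← Real.sin_sq_add_cos_sq θ]; ring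
      have e2 : Real.sin α ^ 2 = 1 - Real.cos α ^ 2 := by rw [← Real.sin_sq_add_cos_sq α]; ring
      have e3 : Real.sin φ ^ 2 = 1 - Real.cos φ ^ 2 := by rw [← Real.sin_sq_add_cos_sq φ]; ring
      have q1 : Mf α θ φ * (1 - Mf α θ φ) = Mt α θ φ ^ 2 + (Real.sin α * Real.sin φ / 2) ^ 2 := by
        unfold Mf Mt
        rw [mul_comm]
        ring_nf
        rw [e1, e2, e3]
        ring
      have q2 : Real.cos θ * Mt α θ φ + Real.sin α * Real.cos φ / 2
          = Real.sin θ * ((1 - 2 * Mf α θ φ) / 2) := by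
        unfold Mf Mt
        ring_nf
        rw [e1]
        ring
      linear_combination (Real.sin θ) * ode - (3/4 * Jn 2 (Mf α θ φ) * Real.sin θ) * q1
        + (1/2 * Jn 1 (Mf α θ φ)) * q2
    · exact (((c0.const_mul _).sub (c1.const_mul _)).sub (c2.const_mul _)).intervalIntegrable _ _
  have i0 : IntervalIntegrable _ volume 0 π := (c0.const_mul (1/4 * Real.sin θ)).intervalIntegrable _ _
  have i1 : IntervalIntegrable _ volume 0 π := (c1.const_mul (Real.cos θ)).intervalIntegrable _ _
  have i2 : IntervalIntegrable _ volume 0 π := (c2.const_mul (Real.sin θ)).intervalIntegrable _ _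
  rw [intervalIntegral.integral_sub (i0.sub i1) i2, intervalIntegral.integral_sub i0 i1,
    intervalIntegral.integral_const_mul, intervalIntegral.integral_const_mul,
    intervalIntegral.integral_const_mul] at key
  simp only [G0, G1, G2]
  linarith

noncomputable def f0 (θ : ℝ) : ℝ := Jn 0 ((1 - Real.cos θ) / 2)
noncomputable def f1 (θ : ℝ) : ℝ := 1/2 * Jn 1 ((1 - Real.cos θ) / 2) * (Real.sin θ / 2)
noncomputable def f2 (θ : ℝ) : ℝ := 3/4 * Jn 2 ((1 - Real.cos θ) / 2) * (Real.sin θ / 2) ^ 2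
  + 1/2 * Jn 1 ((1 - Real.cos θ) / 2) * (Real.cos θ / 2)

lemma m_lt {θ : ℝ} (hθ : |θ| < π) : (1 - Real.cos θ) / 2 < 1 := by
  have h0 := abs_nonneg θ
  have hc : Real.cos (π) < Real.cos (|θ|) :=
    Real.cos_lt_cos_of_nonneg_of_le_pi (by linarith) le_rfl (by linarith)
  rw [Real.cos_pi, Real.cos_abs] at hc
  linarith

lemma m_deriv (θ : ℝ) : HasDerivAt (fun θ => (1 - Real.cos θ) / 2) (Real.sin θ / 2) θ := by
  simpa using ((Real.hasDerivAt_cos θ).const_sub 1).div_const 2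

lemma f0_deriv {θ : ℝ} (hθ : |θ| < π) : HasDerivAt f0 (f1 θ) θ :=
  HasDerivAt.comp (h₂ := Jn 0) θ (J0d (m_lt hθ)) (m_deriv θ)

lemma f1_deriv {θ : ℝ} (hθ : |θ| < π) : HasDerivAt f1 (f2 θ) θ := by
  have h := (HasDerivAt.comp (h₂ := fun m => 1/2 * Jn 1 m) θ (J1d (m_lt hθ)) (m_deriv θ)).mul
    ((Real.hasDerivAt_sin θ).div_const 2)
  refine h.congr_deriv ?_
  simp only [Function.comp, f2]
  ring

lemma f_ode {θ : ℝ} (hθ : |θ| < π) :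
    Real.cos θ * f1 θ + Real.sin θ * f2 θ = 1/4 * Real.sin θ * f0 θ := by
  have ode := J_ode (m_lt hθ)
  have e1 : Real.sin θ ^ 2 = 1 - Real.cos θ ^ 2 := by rw [← Real.sin_sq_add_cos_sq θ]; ring
  unfold f0 f1 f2
  linear_combination Real.sin θ * ode + (3/4 * Jn 2 ((1 - Real.cos θ) / 2) * Real.sin θ / 4) * e1

lemma wronsk {α θ : ℝ} (hα : 0 < α) (hθ0 : 0 < θ) (hθ : θ < π - α) :
    G1 α θ * f0 θ - G0 α θ * f1 θ = 0 := by
  have hU : ∀ x ∈ Set.Icc 0 θ, |x| < π - α := fun x hx => by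
    rw [abs_of_nonneg hx.1]; linarith [hx.2]
  have hd : ∀ x ∈ Set.Icc 0 θ, HasDerivAt
      (fun x => Real.sin x * (G1 α x * f0 x - G0 α x * f1 x)) 0 x := by
    intro x hx
    have h := hU x hx
    have h' : |x| < π := by linarith
    have := (Real.hasDerivAt_sin x).mul
      (((G1_deriv hα h).mul (f0_deriv h')).sub ((G0_deriv hα h).mul (f1_deriv h')))
    refine this.congr_deriv ?_
    have o1 := G_ode hα h
    have o2 := f_ode h'
    simp only [Pi.mul_apply, Pi.sub_apply]
    linear_combination f0 x * o1 - G0 α x * o2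
  obtain ⟨c, hc, hc'⟩ := exists_hasDerivAt_eq_slope _ (fun _ => (0:ℝ)) hθ0
    (fun x hx => (hd x hx).continuousAt.continuousWithinAt) (fun x hx => hd x ⟨hx.1.le, hx.2.le⟩)
  have hs := Real.sin_pos_of_pos_of_lt_pi hθ0 (by linarith)
  have := (div_eq_zero_iff.1 hc'.symm).resolve_right (by linarith)
  simp only [Real.sin_zero, zero_mul, sub_zero] at this
  exact (mul_eq_zero.1 this).resolve_left hs.ne'

lemma product {α θ : ℝ} (hα : 0 < α) (hθ0 : 0 < θ) (hθ : θ < π - α) :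
    G0 α θ = 2 * (f0 θ * f0 α) := by
  have hU : ∀ x ∈ Set.Icc 0 θ, |x| < π - α := fun x hx => by
    rw [abs_of_nonneg hx.1]; linarith [hx.2]
  have hpos : ∀ x ∈ Set.Icc 0 θ, 0 < f0 x := fun x hx =>
    J0_pos (m_lt (by linarith [hU x hx]))
  have hd : ∀ x ∈ Set.Icc 0 θ, HasDerivAt (fun x => G0 α x / f0 x)
      ((G1 α x * f0 x - G0 α x * f1 x) / f0 x ^ 2) x := fun x hx =>
    (G0_deriv hα (hU x hx)).div (f0_deriv (by linarith [hU x hx])) (hpos x hx).ne'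
  obtain ⟨c, hc, hc'⟩ := exists_hasDerivAt_eq_slope _ _ hθ0
    (fun x hx => (hd x hx).continuousAt.continuousWithinAt) (fun x hx => hd x ⟨hx.1.le, hx.2.le⟩)
  rw [wronsk hα hc.1 (hc.2.trans hθ), zero_div] at hc'
  have := (div_eq_zero_iff.1 hc'.symm).resolve_right (by linarith)
  have hG : G0 α 0 = π * f0 α := by
    simp [G0, Mf, f0]
  have hf : f0 0 = π / 2 := by
    simp [f0, J0_zero]
  rw [hG, hf] at this
  have hp := hpos θ ⟨hθ0.le, le_rfl⟩
  have hpi := Real.pi_pos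
  field_simp at this
  linarith

lemma cosint : IntervalIntegrable (fun t => Real.cos t ^ (-(1/2):ℝ)) volume 0 (π/2) := by
  have h := ((intervalIntegral.intervalIntegrable_rpow' (a := π/2) (b := 0) (r := -(1/2))
    (by norm_num)).comp_sub_left (π/2)).const_mul ((2/π)^(-(1/2):ℝ))
  simp only [sub_self, sub_zero] at h
  have hpi := Real.pi_pos
  refine h.mono_fun ?_ ?_
  · exact (Real.measurable_cos.pow_const _).aestronglyMeasurable
  · rw [Filter.EventuallyLE, ae_restrict_iff' measurableSet_uIoc]
    have hne : ∀ᵐ t : ℝ ∂volume, t ≠ π/2 := compl_mem_ae_iff.2 (measure_singleton _)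
    filter_upwards [hne] with t hne ht
    rw [Set.uIoc_of_le (by positivity)] at ht
    have ht2 : t < π/2 := lt_of_le_of_ne ht.2 hne
    have h1 : 0 < π/2 - t := by linarith
    have hc := Real.one_sub_mul_le_cos ht.1.le ht.2
    have e : 1 - 2/π*t = 2/π*(π/2 - t) := by field_simp
    rw [e] at hc
    have h2 : 0 < 2/π*(π/2 - t) := by positivity
    have hcp := h2.trans_le hc
    rw [← Real.mul_rpow (by positivity) h1.le, Real.norm_of_nonneg (by positivity),
      Real.norm_of_nonneg (by positivity)]
    exact Real.rpow_le_rpow_of_nonpos h2 hc (by norm_num)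

lemma J0_le {m : ℝ} (h0 : 0 ≤ m) (h1 : m < 1) :
    Jn 0 m ≤ (∫ t in (0:ℝ)..(π/2), Real.cos t ^ (-(1/2):ℝ)) * (1 - m) ^ (-(1/4):ℝ) := by
  rw [← intervalIntegral.integral_mul_const]
  refine intervalIntegral.integral_mono_on_of_le_Ioo (by positivity)
    ((Jn_sec_cont 0 h1).intervalIntegrable _ _) (cosint.mul_const _) ?_
  intro t ht
  have hc : 0 < Real.cos t := Real.cos_pos_of_mem_Ioo ⟨by linarith [ht.1, Real.pi_pos], ht.2⟩
  have hm : 0 < 1 - m := by linarith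
  have e : (1 - m) ^ (-(1/4):ℝ) = (Real.sqrt (1 - m)) ^ (-(1/2):ℝ) := by
    rw [Real.sqrt_eq_rpow, ← Real.rpow_mul hm.le]; norm_num
  rw [e, ← Real.mul_rpow hc.le (Real.sqrt_nonneg _)]
  have hs : 0 < Real.sqrt (1 - m) := Real.sqrt_pos.2 hm
  have hs2 := Real.sq_sqrt hm.le
  have hsc := Real.sin_sq_add_cos_sq t
  have : Real.cos t * Real.sqrt (1 - m) ≤ 1 - m * Real.sin t ^ 2 := by
    refine le_of_sq_le_sq ?_ (D_pos h1 t).le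
    rw [mul_pow, hs2]
    have a1 : Real.cos t ^ 2 ≤ 1 - m * Real.sin t ^ 2 := by nlinarith [sq_nonneg (Real.sin t)]
    have a2 : 1 - m ≤ 1 - m * Real.sin t ^ 2 := by nlinarith [sq_nonneg (Real.cos t)]
    rw [sq (1 - m * Real.sin t ^ 2)]
    exact mul_le_mul a1 a2 hm.le (D_pos h1 t).le
  have h := Real.rpow_le_rpow_of_nonpos (z := -(1/2)) (by positivity) this (by norm_num)
  simpa using h

lemma limit_eq {θ₀ : ℝ} (h0 : 0 < θ₀) (h1 : θ₀ ≤ π/2) :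
    G0 (π - θ₀) θ₀ = 2 * (f0 θ₀ * f0 (π - θ₀)) := by
  have hpi := Real.pi_pos
  set α := π - θ₀ with hα
  have hα0 : 0 < α := by linarith
  have hsa : 0 < Real.sin α := Real.sin_pos_of_pos_of_lt_pi hα0 (by linarith)
  have hsh : 0 < Real.sin (θ₀/2) := Real.sin_pos_of_pos_of_lt_pi (by linarith) (by linarith)
  have hT : Filter.Tendsto (G0 α) (nhdsWithin θ₀ (Set.Iio θ₀)) (nhds (G0 α θ₀)) := by
    set C := ∫ t in (0:ℝ)..(π/2), Real.cos t ^ (-(1/2):ℝ) with hC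
    have hC0 : 0 ≤ C := by
      refine intervalIntegral.integral_nonneg (by positivity) fun t ht => ?_
      have : 0 ≤ Real.cos t := Real.cos_nonneg_of_mem_Icc ⟨by linarith [ht.1], ht.2⟩
      positivity
    set c := Real.sin (θ₀/2) * Real.sin α with hcdef
    have hc : 0 < c := by positivity
    have hcos : ∀ φ ∈ Set.uIoc 0 π, φ ≠ π → 0 < Real.cos (φ/2) := by
      intro φ hφ hne
      rw [Set.uIoc_of_le hpi.le] at hφ
      have := lt_of_le_of_ne hφ.2 hne
      exact Real.cos_pos_of_mem_Ioo ⟨by linarith [hφ.1], by linarith⟩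
    have hne : ∀ᵐ φ : ℝ ∂volume, φ ≠ π := compl_mem_ae_iff.2 (measure_singleton _)
    have hco : ∀ φ, Real.cos φ = 2 * Real.cos (φ/2) ^ 2 - 1 := fun φ => by
      rw [← Real.cos_two_mul]; ring_nf
    have hmem : Set.Ioo (θ₀/2) θ₀ ∈ nhdsWithin θ₀ (Set.Iio θ₀) :=
      Ioo_mem_nhdsLT (by linarith)
    refine intervalIntegral.tendsto_integral_filter_of_dominated_convergence
      (fun φ => C * (c ^ (-(1/4):ℝ) * Real.cos (φ/2) ^ (-(1/2):ℝ))) ?_ ?_ ?_ ?_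
    · filter_upwards [hmem] with θ hθ
      exact (sec_cont (H := fun θ φ => Jn 0 (Mf α θ φ)) (JM_cont 0 hα0) (y := θ)
        (by rw [Set.mem_ofPred_eq, abs_of_pos (by linarith [hθ.1])]; linarith [hθ.2])).aestronglyMeasurable
    · filter_upwards [hmem] with θ hθ
      filter_upwards [hne] with φ hne hφ
      have hcp := hcos φ hφ hne
      have hM1 : Mf α θ φ < 1 := M_lt hα0
        (by rw [abs_of_pos (by linarith [hθ.1])]; linarith [hθ.2]) φ
      have hs1 : Real.sin (θ₀/2) ≤ Real.sin θ :=
        Real.sin_le_sin_of_le_of_le_pi_div_two (by linarith) (by linarith [hθ.2]) hθ.1.le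
      have hM0 : 0 ≤ Mf α θ φ := by
        have := Real.cos_le_one (θ - α)
        rw [Real.cos_sub] at this
        have h3 : 0 ≤ Real.sin θ * Real.sin α := mul_nonneg (hsh.le.trans hs1) hsa.le
        have := Real.cos_le_one φ
        unfold Mf
        nlinarith
      have hlow : c * Real.cos (φ/2) ^ 2 ≤ 1 - Mf α θ φ := by
        have h2 := Real.neg_one_le_cos (θ + α)
        rw [Real.cos_add] at h2
        have h3 : c * Real.cos (φ/2) ^ 2 ≤ Real.sin θ * Real.sin α * Real.cos (φ/2) ^ 2 := by
          rw [hcdef]; gcongr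
        unfold Mf
        rw [hco φ]
        nlinarith
      rw [Real.norm_of_nonneg (J0_pos hM1).le]
      refine (J0_le hM0 hM1).trans ?_
      refine mul_le_mul_of_nonneg_left ?_ hC0
      refine (Real.rpow_le_rpow_of_nonpos (by positivity) hlow (by norm_num)).trans (le_of_eq ?_)
      rw [Real.mul_rpow hc.le (by positivity), ← Real.rpow_natCast, ← Real.rpow_mul hcp.le]
      norm_num
    · have h := (cosint.comp_mul_right (c := 1/2) (by norm_num)).const_mul (C * c ^ (-(1/4):ℝ))
      have e : π / 2 / (1/2) = π := by ring
      simp only [zero_div, e] at h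
      refine h.congr ?_
      intro φ _
      simp only [mul_one_div, mul_assoc]
    · filter_upwards [hne] with φ hne hφ
      have hcp := hcos φ hφ hne
      have hM1 : Mf α θ₀ φ < 1 := by
        unfold Mf
        rw [hco φ, hα, Real.cos_pi_sub, Real.sin_pi_sub]
        have : 0 < Real.sin θ₀ := Real.sin_pos_of_pos_of_lt_pi h0 (by linarith)
        have : 0 < Real.sin θ₀ ^ 2 * Real.cos (φ/2) ^ 2 := by positivity
        nlinarith [Real.sin_sq_add_cos_sq θ₀]
      have : ContinuousAt (fun θ => Jn 0 (Mf α θ φ)) θ₀ :=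
        ContinuousAt.comp (g := Jn 0) (J0d hM1).continuousAt (M_deriv α θ₀ φ).continuousAt
      exact this.tendsto.mono_left nhdsWithin_le_nhds
  have hT2 : Filter.Tendsto (fun θ => 2 * (f0 θ * f0 α)) (nhdsWithin θ₀ (Set.Iio θ₀))
      (nhds (2 * (f0 θ₀ * f0 α))) := by
    have : ContinuousAt f0 θ₀ := (f0_deriv (by rw [abs_of_pos h0]; linarith)).continuousAt
    exact ((this.tendsto.mul_const _).const_mul 2).mono_left nhdsWithin_le_nhds
  refine tendsto_nhds_unique hT (hT2.congr' ?_)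
  filter_upwards [Ioo_mem_nhdsLT h0] with θ hθ
  exact (product hα0 hθ.1 (by linarith [hθ.2])).symm

theorem stmt_3 (θ : ℝ) (hθ : θ ∈ Set.Icc 0 (π/2)) :
    ellipticK (Real.sin (θ/2)) * ellipticK (Real.cos (θ/2))
      = ∫ φ in (0:ℝ)..(π/2),
          ellipticK (Real.sqrt (1 - Real.sin θ ^ 2 * Real.cos φ ^ 2)) := by
  rcases hθ.1.eq_or_lt with h | h
  · subst h
    have : ellipticK 0 = π/2 := by simp [ellipticK]
    simp [this]
  have hL := limit_eq h hθ.2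
  have hsc := Real.sin_sq_add_cos_sq (θ/2)
  have hct : Real.cos θ = 2 * Real.cos (θ/2) ^ 2 - 1 := by
    rw [← Real.cos_two_mul]; ring_nf
  rw [ellipticK_eq (Real.sin_sq_le_one _), ellipticK_eq (Real.cos_sq_le_one _)]
  have e1 : f0 θ = Jn 0 (Real.sin (θ/2) ^ 2) := by
    unfold f0; congr 1; linarith
  have e2 : f0 (π - θ) = Jn 0 (Real.cos (θ/2) ^ 2) := by
    unfold f0; rw [Real.cos_pi_sub]; congr 1; linarith
  have e3 : G0 (π - θ) θ = 2 * ∫ φ in (0:ℝ)..(π/2),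
      ellipticK (Real.sqrt (1 - Real.sin θ ^ 2 * Real.cos φ ^ 2)) := by
    have := intervalIntegral.smul_integral_comp_mul_left (a := 0) (b := π/2)
      (fun φ => Jn 0 (Mf (π - θ) θ φ)) 2
    rw [mul_zero, mul_div_cancel₀ _ (two_ne_zero)] at this
    rw [G0, ← this, smul_eq_mul]
    congr 2
    ext φ
    have hs := Real.sin_sq_le_one θ
    have hs0 := sq_nonneg (Real.sin θ)
    have hc := Real.cos_sq_le_one φ
    have hc0 := sq_nonneg (Real.cos φ)
    have hn : 0 ≤ 1 - Real.sin θ ^ 2 * Real.cos φ ^ 2 := by nlinarith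
    rw [ellipticK_eq (by rw [Real.sq_sqrt hn]; nlinarith), Real.sq_sqrt hn]
    congr 1
    unfold Mf
    rw [Real.cos_pi_sub, Real.sin_pi_sub, Real.cos_two_mul]
    linear_combination (1/2) * Real.sin_sq_add_cos_sq θ
  rw [e1, e2, e3] at hL
  linarith
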